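/- Set α = N(2a + b + 1/2), β = N(4a + b + 3/2), and μ(x) = e^{−ω r²/2} Π_{i=1}^N |x_i² − x_{i+1}²|^a x_i^b. For every spin state |s⟩ ∈ Σ and every nonnegative integer k, the following Σ-valued functions are eigenfunctions of H_1 on C_1 with eigenvalue E_k = Nω(4a + 2b + 1) + 4kω: (i) Ψ^{(0)}_k = μ · L^{(α−1)}_k(ω r²) Λ|s⟩ for k ≥ 0; (ii) Ψ^{(1)}_k = μ · L^{(α+1)}_{k−1}(ω r²) · [ N Σ_i x_i² |s_i⟩ − r² Λ|s⟩ ] for k ≥ 1; (iii) Ψ^{(2)}_k = μ · L^{(α+3)}_{k−2}(ω r²) · [ N(α+1) Σ_i x_i⁴ − β r⁴ ] Λ|s⟩ for k ≥ 2. That is, H_1 Ψ^{(j)}_k = E_k Ψ^{(j)}_k at every point of C_1 in each case. -/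

import Mathlib

noncomputable section

/-- The spin space `Σ`: complex functions on `Fin N → Fin d`. -/
abbrev Spin (N d : ℕ) : Type := (Fin N → Fin d) → ℂ

/-- Partial derivative `∂_i F` of a function of `N` real variables. -/
noncomputable def pd {N : ℕ} {E : Type} [NormedAddCommGroup E] [NormedSpace ℝ E]
    (i : Fin N) (F : (Fin N → ℝ) → E) : (Fin N → ℝ) → E :=
  fun x => fderiv ℝ F x (Pi.single i 1)

/-- The spin exchange operator `S_{ij}`, transposing the `i`-th and `j`-th spin slots. -/
def Sop {N d : ℕ} (i j : Fin N) (v : Spin N d) : Spin N d :=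
  fun c => v (c ∘ Equiv.swap i j)

/-- The action of a permutation `π ∈ S_N` on the spin space, permuting the `N` spin slots. -/
def spinPerm {N d : ℕ} (π : Equiv.Perm (Fin N)) (v : Spin N d) : Spin N d :=
  fun c => v (c ∘ π)

/-- The spin vector `|s_i⟩ = (1/N!) ∑_{π ∈ S_N, π(1) = i} π |s⟩`. -/
noncomputable def sComp {N d : ℕ} [NeZero N] (s : Spin N d) (i : Fin N) : Spin N d :=
  (N.factorial : ℂ)⁻¹ •
    ∑ π ∈ Finset.univ.filter (fun π : Equiv.Perm (Fin N) => π 0 = i), spinPerm π s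

/-- The symmetrization `Λ|s⟩ = ∑ i, |s_i⟩`. -/
noncomputable def Lam {N d : ℕ} [NeZero N] (s : Spin N d) : Spin N d :=
  ∑ i : Fin N, sComp s i

/-- The configuration space `C_1 = {x : 0 < x_1 < ⋯ < x_N}`. -/
def C1 (N : ℕ) [NeZero N] : Set (Fin N → ℝ) := {x | StrictMono x ∧ 0 < x 0}

/-- The Hamiltonian `H_1 = -∑ i ∂_i² + V_1` with
`V_1 = ω² r² + ∑ i b(b-1)/x_i² + ∑ i 8a² x_i²/((x_i² - x_{i-1}²)(x_i² - x_{i+1}²))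
  + 4a ∑ i (x_i² + x_{i+1}²)(x_i² - x_{i+1}²)⁻² (a - S_{i,i+1})` (indices cyclic). -/
noncomputable def H1 {N d : ℕ} [NeZero N] (a b ω : ℝ)
    (Ψ : (Fin N → ℝ) → Spin N d) : (Fin N → ℝ) → Spin N d :=
  fun x =>
    -(∑ i : Fin N, pd i (pd i Ψ) x)
    + (ω ^ 2 * (∑ i : Fin N, (x i) ^ 2)
        + (∑ i : Fin N, b * (b - 1) / (x i) ^ 2)
        + ∑ i : Fin N, 8 * a ^ 2 * (x i) ^ 2 /
            (((x i) ^ 2 - (x (i - 1)) ^ 2) * ((x i) ^ 2 - (x (i + 1)) ^ 2))) • Ψ x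
    + (4 * a) • ∑ i : Fin N,
        (((x i) ^ 2 + (x (i + 1)) ^ 2) / ((x i) ^ 2 - (x (i + 1)) ^ 2) ^ 2) •
          (a • Ψ x - Sop i (i + 1) (Ψ x))

/-- The gauge factor `μ(x) = exp(-ω r²/2) ∏ i |x_i² - x_{i+1}²|^a x_i^b`. -/
noncomputable def mu1 {N : ℕ} [NeZero N] (a b ω : ℝ) (x : Fin N → ℝ) : ℝ :=
  Real.exp (-(ω / 2) * ∑ i : Fin N, (x i) ^ 2) *
    ∏ i : Fin N, (|(x i) ^ 2 - (x (i + 1)) ^ 2| ^ a * (x i) ^ b)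

/-- The generalized binomial coefficient `C(x, j) = x(x-1)⋯(x-j+1)/j!`. -/
noncomputable def genBinom (x : ℝ) (j : ℕ) : ℝ :=
  (descPochhammer ℝ j).eval x / j.factorial

/-- The generalized Laguerre polynomial
`L^{(λ)}_n(t) = ∑_{k=0}^n (-1)^k C(n+λ, n-k) t^k / k!`. -/
noncomputable def laguerre (lam : ℝ) (n : ℕ) (t : ℝ) : ℝ :=
  ∑ k ∈ Finset.range (n + 1),
    (-1 : ℝ) ^ k * genBinom ((n : ℝ) + lam) (n - k) * t ^ k / (k.factorial : ℝ)

/-!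
Conjugation by the gauge factor `μ` turns `H1` into `E_0 - J + 2ω ∑ i, x_i ∂_i`, where `J` is a
second order operator independent of `ω`. If `P` is homogeneous of degree `δ` and `J P = 0`, then
by Euler's theorem `J (f(r²) P)` and `∑ i, x_i ∂_i (f(r²) P)` are radial multiples of `P`, and the
eigenvalue equation for `f(r²) P` becomes an ordinary differential equation for `f`: the Laguerre
equation solved by `f(t) = L^{(α+δ-1)}_n(ω t)`, with eigenvalue `E_0 + (4n + 2δ)ω`. The three
families come from such solutions `P` of degrees `0`, `2` and `4`.
-/

section LaguerrePolynomial

open Polynomial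

/-- The coefficient `(-1)^k C(n+λ, n-k) / k!` of `t^k` in the Laguerre polynomial `L^{(λ)}_n(t)`;
the case distinction avoids the truncated subtraction `n - k` for `k > n`. -/
def laguerreCoeff (lam : ℝ) (n k : ℕ) : ℝ :=
  if k ≤ n then (-1 : ℝ) ^ k * genBinom (n + lam) (n - k) / k.factorial else 0

/-- The Laguerre polynomial `L^{(λ)}_n` as an element of `ℝ[X]`, for which the differential
equation can be checked coefficientwise. -/
def laguerrePoly (lam : ℝ) (n : ℕ) : ℝ[X] :=
  ∑ k ∈ Finset.range (n + 1), C (laguerreCoeff lam n k) * X ^ k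

lemma eval_laguerrePoly (lam : ℝ) (n : ℕ) (t : ℝ) :
    (laguerrePoly lam n).eval t = laguerre lam n t := by
  rw [laguerrePoly, laguerre, eval_finsetSum]
  refine Finset.sum_congr rfl fun k hk => ?_
  have hkn : k ≤ n := Finset.mem_range_succ_iff.mp hk
  simp only [laguerreCoeff, hkn, if_true, eval_mul, eval_C, eval_pow, eval_X]
  ring

lemma coeff_laguerrePoly (lam : ℝ) (n k : ℕ) :
    (laguerrePoly lam n).coeff k = laguerreCoeff lam n k := by
  simp only [laguerrePoly, finsetSum_coeff, coeff_C_mul_X_pow, Finset.sum_ite_eq,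
    Finset.mem_range_succ_iff]
  exact ite_eq_left_iff.mpr fun hkn => (if_neg hkn).symm

lemma laguerreCoeff_succ (lam : ℝ) (n k : ℕ) :
    (k + 1) * (k + lam + 1) * laguerreCoeff lam n (k + 1) = -(n - k) * laguerreCoeff lam n k := by
  rcases lt_trichotomy k n with hlt | rfl | hgt
  · obtain ⟨m, rfl⟩ := Nat.exists_eq_add_of_lt hlt
    have hsucc : k + m + 1 - (k + 1) = m := by lia
    have hself : k + m + 1 - k = m + 1 := by lia
    rw [laguerreCoeff, laguerreCoeff, if_pos (by lia), if_pos (by lia), hsucc, hself]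
    simp only [genBinom, descPochhammer_succ_eval, Nat.factorial_succ]
    push_cast
    field_simp
    ring
  · simp [laguerreCoeff]
  · simp [laguerreCoeff, hgt.not_ge, (hgt.trans k.lt_succ_self).not_ge]

lemma laguerrePoly_differential_equation (lam : ℝ) (n : ℕ) :
    X * derivative (derivative (laguerrePoly lam n))
      + (C (lam + 1) - X) * derivative (laguerrePoly lam n)
      + C (n : ℝ) * laguerrePoly lam n = 0 := by
  ext k
  have hrec := laguerreCoeff_succ lam n k
  rw [sub_mul]
  cases k with
  | zero =>
    simp only [coeff_add, coeff_sub, mul_coeff_zero, coeff_X_zero, coeff_C_zero,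
      coeff_derivative, coeff_laguerrePoly, coeff_zero]
    push_cast at hrec ⊢
    linarith
  | succ k =>
    simp only [coeff_add, coeff_sub, coeff_X_mul, coeff_C_mul, coeff_derivative,
      coeff_laguerrePoly, coeff_zero]
    push_cast at hrec ⊢
    linarith

lemma contDiff_laguerre (lam : ℝ) (n : ℕ) : ContDiff ℝ 2 (laguerre lam n) := by
  unfold laguerre
  fun_prop

lemma laguerre_differential_equation (lam : ℝ) (n : ℕ) (t : ℝ) :
    t * deriv (deriv (laguerre lam n)) t + (lam + 1 - t) * deriv (laguerre lam n) t
      + n * laguerre lam n t = 0 := by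
  have hderiv (p : ℝ[X]) : deriv (fun s => p.eval s) = fun s => p.derivative.eval s :=
    funext fun _ => p.deriv
  have heval : laguerre lam n = fun s => (laguerrePoly lam n).eval s :=
    funext fun s => (eval_laguerrePoly lam n s).symm
  have hode := congrArg (eval t) (laguerrePoly_differential_equation lam n)
  simp only [eval_add, eval_mul, eval_sub, eval_X, eval_C, eval_zero] at hode
  simpa only [heval, hderiv] using hode

lemma laguerre_scaled_differential_equation (lam ω : ℝ) (n : ℕ) (t : ℝ) :
    t * deriv (deriv fun r => laguerre lam n (ω * r)) t
        + (lam + 1 - ω * t) * deriv (fun r => laguerre lam n (ω * r)) t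
        + n * ω * laguerre lam n (ω * t) = 0 := by
  have hderiv : (deriv fun r => laguerre lam n (ω * r)) =
      fun r => ω * deriv (laguerre lam n) (ω * r) := by
    ext1 r
    exact deriv_comp_mul_left ω (laguerre lam n) r
  rw [hderiv, deriv_const_mul_field, deriv_comp_mul_left, smul_eq_mul]
  linear_combination ω * laguerre_differential_equation lam n (ω * t)

end LaguerrePolynomial

section PartialDerivative

variable {N : ℕ} {E : Type} [NormedAddCommGroup E] [NormedSpace ℝ E] {i : Fin N} {x : Fin N → ℝ}

lemma pd_eq_of_hasFDerivAt {F : (Fin N → ℝ) → E} {F' : (Fin N → ℝ) →L[ℝ] E}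
    (h : HasFDerivAt F F' x) : pd i F x = F' (Pi.single i 1) := by
  rw [pd, h.fderiv]

lemma pd_congr_of_eventuallyEq {F G : (Fin N → ℝ) → E} (h : F =ᶠ[nhds x] G) :
    pd i F x = pd i G x := by
  rw [pd, pd, h.fderiv_eq]

lemma pd_const (v : E) : pd i (fun _ : Fin N → ℝ => v) = fun _ => 0 := by
  ext1; simp [pd]

lemma sum_smul_pd (F : (Fin N → ℝ) → E) (x : Fin N → ℝ) :
    ∑ i, x i • pd i F x = fderiv ℝ F x x := by
  simp only [pd, ← map_smul, ← map_sum]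
  rw [← pi_eq_sum_univ' x]

/-- **Euler's theorem** on homogeneous functions. -/
lemma sum_smul_pd_of_homogeneous {F : (Fin N → ℝ) → E} {δ : ℕ}
    (hF : DifferentiableAt ℝ F x) (hhom : ∀ t : ℝ, F (t • x) = t ^ δ • F x) :
    ∑ i, x i • pd i F x = (δ : ℝ) • F x := by
  have hray : HasDerivAt (fun t : ℝ => F (t • x)) (fderiv ℝ F x x) 1 := by
    have hline : HasDerivAt (fun t : ℝ => t • x) x 1 := by
      simpa using (hasDerivAt_id (1 : ℝ)).smul_const x
    exact HasFDerivAt.comp_hasDerivAt 1 (by simpa using hF.hasFDerivAt) hline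
  have hpow : HasDerivAt (fun t : ℝ => t ^ δ • F x) ((δ : ℝ) • F x) 1 := by
    simpa using (hasDerivAt_pow δ (1 : ℝ)).smul_const (F x)
  simp only [hhom] at hray
  rw [sum_smul_pd, hray.unique hpow]

lemma differentiableAt_pd {F : (Fin N → ℝ) → E} (hF : ContDiffAt ℝ 2 F x) :
    DifferentiableAt ℝ (pd i F) x :=
  ((hF.fderiv_right (m := 1) le_rfl).differentiableAt one_ne_zero).clm_apply
    (differentiableAt_const _)

lemma eventually_differentiableAt {F : (Fin N → ℝ) → E} (hF : ContDiffAt ℝ 2 F x) :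
    ∀ᶠ y in nhds x, DifferentiableAt ℝ F y :=
  (hF.eventually (by simp)).mono fun _ hy => hy.differentiableAt two_ne_zero

lemma pd_add {F G : (Fin N → ℝ) → E} (hF : DifferentiableAt ℝ F x)
    (hG : DifferentiableAt ℝ G x) :
    pd i (fun y => F y + G y) x = pd i F x + pd i G x :=
  pd_eq_of_hasFDerivAt (hF.hasFDerivAt.add hG.hasFDerivAt)

lemma pd_pd_add {F G : (Fin N → ℝ) → E} (hF : ContDiffAt ℝ 2 F x) (hG : ContDiffAt ℝ 2 G x) :
    pd i (pd i fun y => F y + G y) x = pd i (pd i F) x + pd i (pd i G) x := by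
  have hpd : pd i (fun y => F y + G y) =ᶠ[nhds x] fun y => pd i F y + pd i G y := by
    filter_upwards [eventually_differentiableAt hF, eventually_differentiableAt hG]
      with y hFy hGy using pd_add hFy hGy
  rw [pd_congr_of_eventuallyEq hpd, pd_add (differentiableAt_pd hF) (differentiableAt_pd hG)]

lemma pd_const_smul (c : ℝ) (F : (Fin N → ℝ) → E) :
    pd i (fun y => c • F y) = fun y => c • pd i F y := by
  ext1 y
  exact DFunLike.congr_fun (congrFun (fderiv_const_smul_field (f := F) c) y) (Pi.single i 1)

lemma pd_smul {g : (Fin N → ℝ) → ℝ} {F : (Fin N → ℝ) → E} (hg : DifferentiableAt ℝ g x)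
    (hF : DifferentiableAt ℝ F x) :
    pd i (fun y => g y • F y) x = pd i g x • F x + g x • pd i F x := by
  rw [pd_eq_of_hasFDerivAt (hg.hasFDerivAt.fun_smul hF.hasFDerivAt), add_comm]
  rfl

lemma pd_pd_smul {g : (Fin N → ℝ) → ℝ} {F : (Fin N → ℝ) → E} (hg : ContDiffAt ℝ 2 g x)
    (hF : ContDiffAt ℝ 2 F x) :
    pd i (pd i fun y => g y • F y) x =
      pd i (pd i g) x • F x + (2 * pd i g x) • pd i F x + g x • pd i (pd i F) x := by
  have hpd : pd i (fun y => g y • F y) =ᶠ[nhds x] fun y => pd i g y • F y + g y • pd i F y := by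
    filter_upwards [eventually_differentiableAt hg, eventually_differentiableAt hF]
      with y hgy hFy using pd_smul hgy hFy
  have hg' := hg.differentiableAt two_ne_zero
  have hF' := hF.differentiableAt two_ne_zero
  rw [pd_congr_of_eventuallyEq hpd,
    pd_add ((differentiableAt_pd hg).fun_smul hF') (hg'.fun_smul (differentiableAt_pd hF)),
    pd_smul (differentiableAt_pd hg) hF', pd_smul hg' (differentiableAt_pd hF)]
  module

lemma pd_comp {f : ℝ → E} {g : (Fin N → ℝ) → ℝ} (hf : DifferentiableAt ℝ f (g x))
    (hg : DifferentiableAt ℝ g x) :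
    pd i (fun y => f (g y)) x = pd i g x • deriv f (g x) :=
  pd_eq_of_hasFDerivAt (hf.hasFDerivAt.comp x hg.hasFDerivAt) |>.trans <| by
    simp [pd, ← toSpanSingleton_deriv]

lemma pd_pd_comp {f : ℝ → E} {g : (Fin N → ℝ) → ℝ} (hf : ContDiff ℝ 2 f)
    (hg : ContDiffAt ℝ 2 g x) :
    pd i (pd i fun y => f (g y)) x =
      pd i g x ^ 2 • deriv (deriv f) (g x) + pd i (pd i g) x • deriv f (g x) := by
  have hf' : Differentiable ℝ (deriv f) :=
    (contDiff_succ_iff_deriv.mp hf).2.2.differentiable one_ne_zero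
  have hpd : pd i (fun y => f (g y)) =ᶠ[nhds x] fun y => pd i g y • deriv f (g y) := by
    filter_upwards [eventually_differentiableAt hg] with y hgy
      using pd_comp (hf.differentiable two_ne_zero _) hgy
  have hg' := hg.differentiableAt two_ne_zero
  rw [pd_congr_of_eventuallyEq hpd,
    pd_smul (differentiableAt_pd hg) (hf'.differentiableAt.fun_comp' x hg'),
    pd_comp hf'.differentiableAt hg', smul_smul, ← sq, add_comm]

lemma pd_comp_apply {f : ℝ → E} (hf : Differentiable ℝ f) (j : Fin N) :
    pd i (fun y => f (y j)) x = if j = i then deriv f (x i) else 0 := by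
  have hproj : pd i (fun y : Fin N → ℝ => y j) x = if j = i then 1 else 0 :=
    (pd_eq_of_hasFDerivAt (hasFDerivAt_apply j x)).trans (Pi.single_apply i 1 j)
  rw [pd_comp hf.differentiableAt (differentiableAt_apply j x), hproj, ite_smul, one_smul,
    zero_smul]
  exact ite_congr rfl (fun hji => by rw [hji]) fun _ => rfl

lemma pd_sum_pow_smul (n : ℕ) (u : Fin N → E) :
    pd i (fun y => ∑ k, y k ^ n • u k) = fun x => ((n : ℝ) * x i ^ (n - 1)) • u i := by
  ext1 x
  have hterm (k : Fin N) : Differentiable ℝ fun t : ℝ => t ^ n • u k := by fun_prop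
  have hpd (k : Fin N) := pd_comp_apply (i := i) (x := x) (hterm k) k
  simp only [pd] at hpd ⊢
  rw [fderiv_fun_sum fun k _ => (hterm k).differentiableAt.fun_comp' x (differentiableAt_apply k x)]
  simp [hpd, deriv_smul_const]

lemma pd_pd_sum_pow_smul (n : ℕ) (u : Fin N → E) :
    pd i (pd i fun y => ∑ k, y k ^ n • u k) =
      fun x => ((n : ℝ) * ((n - 1 : ℕ) * x i ^ (n - 1 - 1))) • u i := by
  ext1 x
  rw [pd_sum_pow_smul, pd_comp_apply (f := fun t => ((n : ℝ) * t ^ (n - 1)) • u i) (by fun_prop),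
    if_pos rfl]
  exact (((hasDerivAt_pow (n - 1) (x i)).const_mul (n : ℝ)).smul_const (u i)).deriv

lemma pd_sum_sq : pd i (fun y => ∑ k, y k ^ 2) x = 2 * x i := by
  simpa using congrFun (pd_sum_pow_smul (i := i) 2 fun _ => (1 : ℝ)) x

lemma pd_pd_sum_sq : pd i (pd i fun y => ∑ k, y k ^ 2) x = 2 := by
  simpa using congrFun (pd_pd_sum_pow_smul (i := i) 2 fun _ => (1 : ℝ)) x

lemma pd_radial {f : ℝ → ℝ} (hf : Differentiable ℝ f) :
    pd i (fun y => f (∑ k, y k ^ 2)) x = 2 * x i * deriv f (∑ k, x k ^ 2) := by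
  rw [pd_comp hf.differentiableAt (by fun_prop), pd_sum_sq, smul_eq_mul]

lemma pd_pd_radial {f : ℝ → ℝ} (hf : ContDiff ℝ 2 f) :
    pd i (pd i fun y => f (∑ k, y k ^ 2)) x =
      4 * deriv (deriv f) (∑ k, x k ^ 2) * x i ^ 2 + 2 * deriv f (∑ k, x k ^ 2) := by
  rw [pd_pd_comp hf (by fun_prop), pd_sum_sq, pd_pd_sum_sq, smul_eq_mul, smul_eq_mul]
  ring

lemma sum_smul_pd_radial_smul {f : ℝ → ℝ} (hf : Differentiable ℝ f) {F : (Fin N → ℝ) → E}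
    (hF : DifferentiableAt ℝ F x) :
    ∑ i, x i • pd i (fun y => f (∑ k, y k ^ 2) • F y) x =
      (2 * (∑ i, x i ^ 2) * deriv f (∑ i, x i ^ 2)) • F x
        + f (∑ i, x i ^ 2) • ∑ i, x i • pd i F x := by
  rw [Finset.mul_sum, Finset.sum_mul, Finset.sum_smul, Finset.smul_sum, ← Finset.sum_add_distrib]
  refine Finset.sum_congr rfl fun i _ => ?_
  rw [pd_smul (by fun_prop) hF, pd_radial hf]
  module

end PartialDerivative

section SpinExchange

variable {N d : ℕ}

lemma Sop_smul (i j : Fin N) (c : ℝ) (v : Spin N d) : Sop i j (c • v) = c • Sop i j v := rfl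

lemma Sop_sub (i j : Fin N) (v w : Spin N d) : Sop i j (v - w) = Sop i j v - Sop i j w := rfl

lemma Sop_add (i j : Fin N) (v w : Spin N d) : Sop i j (v + w) = Sop i j v + Sop i j w := rfl

lemma Sop_sum {ι : Type*} (t : Finset ι) (i j : Fin N) (v : ι → Spin N d) :
    Sop i j (∑ k ∈ t, v k) = ∑ k ∈ t, Sop i j (v k) :=
  map_sum (LinearMap.funLeft ℝ ℂ fun c : Fin N → Fin d => c ∘ Equiv.swap i j) v t

lemma Sop_sComp [NeZero N] (s : Spin N d) (i j k : Fin N) :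
    Sop i j (sComp s k) = sComp s (Equiv.swap i j k) := by
  ext c
  simp only [Sop, sComp, Pi.smul_apply, Finset.sum_apply, spinPerm]
  congr 1
  exact Finset.sum_equiv (Equiv.mulLeft (Equiv.swap i j)) (by simp) fun _ _ => rfl

lemma Sop_Lam [NeZero N] (s : Spin N d) (i j : Fin N) : Sop i j (Lam s) = Lam s := by
  simp only [Lam, Sop_sum, Sop_sComp]
  exact Equiv.sum_comp (Equiv.swap i j) (sComp s)

lemma sum_smul_sub_Sop {u : Fin N → Spin N d}
    (hu : ∀ i j k, Sop i j (u k) = u (Equiv.swap i j k)) (z : Fin N → ℝ) {i j : Fin N}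
    (hij : i ≠ j) :
    ∑ k, z k • u k - Sop i j (∑ k, z k • u k) = (z i - z j) • (u i - u j) := by
  have hSop : Sop i j (∑ k, z k • u k) = ∑ k, z (Equiv.swap i j k) • u k := by
    simp only [Sop_sum, Sop_smul, hu]
    rw [← Equiv.sum_comp (Equiv.swap i j)]
    simp only [Equiv.swap_apply_self]
  rw [hSop, ← Finset.sum_sub_distrib, Fintype.sum_eq_add i j hij]
  · rw [Equiv.swap_apply_left, Equiv.swap_apply_right]
    module
  · rintro k ⟨hki, hkj⟩
    rw [Equiv.swap_apply_of_ne_of_ne hki hkj, sub_self]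

end SpinExchange

lemma sum_sub_pred_smul {G R M : Type*} [AddGroup G] [Fintype G] [Ring R] [AddCommGroup M]
    [Module R M] (g : G) (c : G → R) (v : G → M) :
    ∑ i, (c i - c (i - g)) • v i = ∑ i, c i • (v i - v (i + g)) := by
  have hshift : ∑ i, c (i - g) • v i = ∑ i, c i • v (i + g) := by
    rw [← Equiv.sum_comp (Equiv.addRight g)]
    simp only [Equiv.coe_addRight, add_sub_cancel_right]
  simp only [sub_smul, smul_sub, Finset.sum_sub_distrib, hshift]

section ConfigurationSpace

variable {N : ℕ} [NeZero N] {x : Fin N → ℝ}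

lemma isOpen_C1 : IsOpen (C1 N) := by
  have hC1 : C1 N = (⋂ i, ⋂ j, ⋂ _ : i < j, {x | x i < x j}) ∩ {x | 0 < x 0} := by
    ext; simp [C1, StrictMono]
  rw [hC1]
  exact (isOpen_iInter_of_finite fun i => isOpen_iInter_of_finite fun j =>
    isOpen_iInter_of_finite fun _ => isOpen_lt (continuous_apply i) (continuous_apply j)).inter
      (isOpen_lt continuous_const (continuous_apply 0))

lemma pos_of_mem_C1 (hx : x ∈ C1 N) (i : Fin N) : 0 < x i :=
  hx.2.trans_le (hx.1.monotone (Fin.zero_le i))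

lemma add_one_ne_self (hN : 2 ≤ N) (i : Fin N) : i + 1 ≠ i := by
  obtain ⟨n, rfl⟩ := Nat.exists_eq_add_of_le' hN
  simp

lemma sub_one_ne_self (hN : 2 ≤ N) (i : Fin N) : i - 1 ≠ i := fun h =>
  add_one_ne_self hN i (sub_eq_iff_eq_add.mp h).symm

lemma sq_sub_sq_ne_zero_of_mem_C1 (hx : x ∈ C1 N) {i j : Fin N} (hij : i ≠ j) :
    x i ^ 2 - x j ^ 2 ≠ 0 := fun h =>
  hij <| hx.1.injective <| (pow_left_inj₀ (pos_of_mem_C1 hx i).le (pos_of_mem_C1 hx j).le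
    two_ne_zero).mp (sub_eq_zero.mp h)

end ConfigurationSpace

section Gauge

variable {N : ℕ} [NeZero N] {x : Fin N → ℝ}

/-- The reciprocal `1 / (x_i² - x_{i+1}²)` of the gap between cyclic neighbours. -/
def invSqGap (x : Fin N → ℝ) (i : Fin N) : ℝ := (x i ^ 2 - x (i + 1) ^ 2)⁻¹

/-- The coefficient `(x_i² + x_{i+1}²) / (x_i² - x_{i+1}²)²` of the exchange term in `H1`. -/
def exchangeCoeff (x : Fin N → ℝ) (i : Fin N) : ℝ :=
  (x i ^ 2 + x (i + 1) ^ 2) / (x i ^ 2 - x (i + 1) ^ 2) ^ 2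

/-- The spin-independent part of the potential `V_1` of `H1`. -/
def scalarPotential (a b ω : ℝ) (x : Fin N → ℝ) : ℝ :=
  ω ^ 2 * (∑ i, x i ^ 2) + (∑ i, b * (b - 1) / x i ^ 2)
    + ∑ i, 8 * a ^ 2 * x i ^ 2 / ((x i ^ 2 - x (i - 1) ^ 2) * (x i ^ 2 - x (i + 1) ^ 2))

/-- The logarithmic derivative `∂_i log μ` of the gauge factor at `ω = 0`, where the term
`1 / (x_i² - x_{i-1}²)` is written as `-invSqGap x (i - 1)`. -/
def gaugeDrift (a b : ℝ) (x : Fin N → ℝ) (i : Fin N) : ℝ :=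
  b / x i + 2 * a * x i * (invSqGap x i - invSqGap x (i - 1))

/-- The logarithm of the gauge factor `mu1` on `C1 N`. -/
def logGauge (a b ω : ℝ) (x : Fin N → ℝ) : ℝ :=
  -(ω / 2) * (∑ i, x i ^ 2) + ∑ i, (a * Real.log (x i ^ 2 - x (i + 1) ^ 2) + b * Real.log (x i))

lemma sq_sub_sq_mul_invSqGap (hN : 2 ≤ N) (hx : x ∈ C1 N) (i : Fin N) :
    (x i ^ 2 - x (i + 1) ^ 2) * invSqGap x i = 1 :=
  mul_inv_cancel₀ (sq_sub_sq_ne_zero_of_mem_C1 hx (add_one_ne_self hN i).symm)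

lemma exchangeCoeff_eq (x : Fin N → ℝ) (i : Fin N) :
    exchangeCoeff x i = (x i ^ 2 + x (i + 1) ^ 2) * invSqGap x i ^ 2 := by
  rw [exchangeCoeff, invSqGap, inv_pow, div_eq_mul_inv]

lemma mu1_eq_exp_logGauge (hN : 2 ≤ N) (a b ω : ℝ) (hx : x ∈ C1 N) :
    mu1 a b ω x = Real.exp (logGauge a b ω x) := by
  rw [mu1, logGauge, Real.exp_add, Real.exp_sum]
  congr 1
  refine Finset.prod_congr rfl fun i _ => ?_
  have hgap := sq_sub_sq_ne_zero_of_mem_C1 hx (add_one_ne_self hN i).symm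
  rw [Real.exp_add, Real.rpow_def_of_pos (abs_pos.mpr hgap),
    Real.rpow_def_of_pos (pos_of_mem_C1 hx i), Real.log_abs, mul_comm a, mul_comm b]

lemma mu1_eventuallyEq_exp_logGauge (hN : 2 ≤ N) (a b ω : ℝ) (hx : x ∈ C1 N) :
    mu1 a b ω =ᶠ[nhds x] fun y => Real.exp (logGauge a b ω y) := by
  filter_upwards [isOpen_C1.mem_nhds hx] with y hy using mu1_eq_exp_logGauge hN a b ω hy

lemma contDiffAt_logGauge (hN : 2 ≤ N) (a b ω : ℝ) (hx : x ∈ C1 N) :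
    ContDiffAt ℝ 2 (logGauge a b ω) x := by
  have hgap (i : Fin N) := sq_sub_sq_ne_zero_of_mem_C1 hx (add_one_ne_self hN i).symm
  have hpos (i : Fin N) := (pos_of_mem_C1 hx i).ne'
  unfold logGauge
  fun_prop (disch := simp [hgap, hpos])

lemma contDiffAt_mu1 (hN : 2 ≤ N) (a b ω : ℝ) (hx : x ∈ C1 N) :
    ContDiffAt ℝ 2 (mu1 a b ω) x :=
  (contDiffAt_logGauge hN a b ω hx).exp.congr_of_eventuallyEq
    (mu1_eventuallyEq_exp_logGauge hN a b ω hx)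

lemma pd_logGauge (hN : 2 ≤ N) (a b ω : ℝ) (hx : x ∈ C1 N) (j : Fin N) :
    pd j (logGauge a b ω) x = gaugeDrift a b x j - ω * x j := by
  have hcoord (i : Fin N) := hasFDerivAt_apply (𝕜 := ℝ) (F' := fun _ : Fin N => ℝ) i x
  have hlog : HasFDerivAt (logGauge a b ω) _ x :=
    ((HasFDerivAt.fun_sum (u := Finset.univ) fun i _ => (hcoord i).pow 2).const_mul
      (-(ω / 2))).add
    (HasFDerivAt.fun_sum (u := Finset.univ) fun i _ =>
      (((((hcoord i).pow 2).sub ((hcoord (i + 1)).pow 2)).log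
        (sq_sub_sq_ne_zero_of_mem_C1 hx (add_one_ne_self hN i).symm)).const_mul a).add
      (((hcoord i).log (pos_of_mem_C1 hx i).ne').const_mul b))
  rw [pd_eq_of_hasFDerivAt hlog]
  simp only [Nat.add_one_sub_one, pow_one, nsmul_eq_mul, Nat.cast_ofNat, neg_smul, Pi.sub_apply,
    Finset.sum_add_distrib, add_apply, neg_apply, smul_apply, sum_apply,
    ContinuousLinearMap.proj_apply, Pi.single_apply, smul_eq_mul, mul_ite, mul_one, mul_zero,
    Finset.sum_ite_eq', Finset.mem_univ, if_true, sub_apply, ← eq_sub_iff_add_eq, mul_sub,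
    Finset.sum_sub_distrib, sub_add_cancel, gaugeDrift, invSqGap]
  ring

lemma pd_gaugeDrift_sub (hN : 2 ≤ N) (a b ω : ℝ) (hx : x ∈ C1 N) (j : Fin N) :
    pd j (fun y => gaugeDrift a b y j - ω * y j) x =
      -b / x j ^ 2 + 2 * a * (invSqGap x j - invSqGap x (j - 1))
        - 4 * a * x j ^ 2 * (invSqGap x j ^ 2 + invSqGap x (j - 1) ^ 2) - ω := by
  have hcoord (i : Fin N) := hasFDerivAt_apply (𝕜 := ℝ) (F' := fun _ : Fin N => ℝ) i x
  have hgap (i : Fin N) := sq_sub_sq_ne_zero_of_mem_C1 hx (add_one_ne_self hN i).symm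
  have hpos := (pos_of_mem_C1 hx j).ne'
  have hinvSqGap (i : Fin N) : HasFDerivAt (invSqGap · i) _ x :=
    (hasDerivAt_inv (hgap i)).comp_hasFDerivAt x (((hcoord i).pow 2).sub ((hcoord (i + 1)).pow 2))
  have hdrift : HasFDerivAt (fun y => gaugeDrift a b y j - ω * y j) _ x :=
    ((((hasDerivAt_inv hpos).comp_hasFDerivAt x (hcoord j)).const_mul b).add
      (((hcoord j).const_mul (2 * a)).mul ((hinvSqGap j).sub (hinvSqGap (j - 1))))).sub
      ((hcoord j).const_mul ω)
  rw [pd_eq_of_hasFDerivAt hdrift]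
  simp only [Nat.add_one_sub_one, pow_one, nsmul_eq_mul, Nat.cast_ofNat, sub_add_cancel, invSqGap,
    Pi.sub_apply, sub_apply, add_apply, smul_apply, ContinuousLinearMap.proj_apply,
    Pi.single_eq_same, Pi.single_eq_of_ne (add_one_ne_self hN j),
    Pi.single_eq_of_ne (sub_one_ne_self hN j), smul_eq_mul, inv_pow]
  ring

lemma pd_mu1 (hN : 2 ≤ N) (a b ω : ℝ) (hx : x ∈ C1 N) (j : Fin N) :
    pd j (mu1 a b ω) x = mu1 a b ω x * (gaugeDrift a b x j - ω * x j) := by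
  have hlog := (contDiffAt_logGauge hN a b ω hx).differentiableAt two_ne_zero
  rw [pd_congr_of_eventuallyEq (mu1_eventuallyEq_exp_logGauge hN a b ω hx),
    pd_comp Real.differentiableAt_exp hlog, pd_logGauge hN a b ω hx, Real.deriv_exp,
    mu1_eq_exp_logGauge hN a b ω hx, smul_eq_mul, mul_comm]

lemma pd_pd_mu1 (hN : 2 ≤ N) (a b ω : ℝ) (hx : x ∈ C1 N) (j : Fin N) :
    pd j (pd j (mu1 a b ω)) x = mu1 a b ω x * ((gaugeDrift a b x j - ω * x j) ^ 2 +
      pd j (fun y => gaugeDrift a b y j - ω * y j) x) := by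
  have hpd : pd j (mu1 a b ω) =ᶠ[nhds x]
      fun y => mu1 a b ω y • (gaugeDrift a b y j - ω * y j) := by
    filter_upwards [isOpen_C1.mem_nhds hx] with y hy using pd_mu1 hN a b ω hy j
  have hlog : pd j (logGauge a b ω) =ᶠ[nhds x] fun y => gaugeDrift a b y j - ω * y j := by
    filter_upwards [isOpen_C1.mem_nhds hx] with y hy using pd_logGauge hN a b ω hy j
  have hdrift : DifferentiableAt ℝ (fun y => gaugeDrift a b y j - ω * y j) x :=
    (differentiableAt_pd (contDiffAt_logGauge hN a b ω hx)).congr_of_eventuallyEq hlog.symm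
  rw [pd_congr_of_eventuallyEq hpd,
    pd_smul ((contDiffAt_mu1 hN a b ω hx).differentiableAt two_ne_zero) hdrift,
    pd_mu1 hN a b ω hx, smul_eq_mul, smul_eq_mul]
  ring

lemma gaugeDrift_mul_self (a b : ℝ) (hx : x ∈ C1 N) (i : Fin N) :
    gaugeDrift a b x i * x i = b + 2 * a * ((invSqGap x i - invSqGap x (i - 1)) * x i ^ 2) := by
  rw [gaugeDrift, add_mul, div_mul_cancel₀ b (pos_of_mem_C1 hx i).ne']
  ring

lemma sum_gaugeDrift_mul_self_smul {E : Type*} [AddCommGroup E] [Module ℝ E] (a b : ℝ)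
    (hx : x ∈ C1 N) (v : Fin N → E) :
    ∑ i, (gaugeDrift a b x i * x i) • v i =
      b • ∑ i, v i
        + (2 * a) • ∑ i, invSqGap x i • (x i ^ 2 • v i - x (i + 1) ^ 2 • v (i + 1)) := by
  rw [← sum_sub_pred_smul 1 (invSqGap x) fun i => x i ^ 2 • v i]
  simp only [gaugeDrift_mul_self a b hx, add_smul, mul_smul, Finset.sum_add_distrib,
    Finset.smul_sum]

lemma sum_gaugeDrift_mul_self (hN : 2 ≤ N) (a b : ℝ) (hx : x ∈ C1 N) :
    ∑ i, gaugeDrift a b x i * x i = N * (b + 2 * a) := by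
  have hgap (i : Fin N) : invSqGap x i * (x i ^ 2 - x (i + 1) ^ 2) = 1 := by
    rw [mul_comm, sq_sub_sq_mul_invSqGap hN hx]
  have h := sum_gaugeDrift_mul_self_smul a b hx fun _ => (1 : ℝ)
  simp only [smul_eq_mul, mul_one, hgap, Finset.sum_const, Finset.card_univ, Fintype.card_fin,
    nsmul_eq_mul] at h
  rw [h]
  ring

lemma sum_gaugeDrift_mul_cube (hN : 2 ≤ N) (a b : ℝ) (hx : x ∈ C1 N) :
    ∑ i, gaugeDrift a b x i * x i ^ 3 = (4 * a + b) * ∑ i, x i ^ 2 := by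
  have hgap (i : Fin N) : invSqGap x i * (x i ^ 2 * x i ^ 2 - x (i + 1) ^ 2 * x (i + 1) ^ 2) =
      x i ^ 2 + x (i + 1) ^ 2 := by
    linear_combination (x i ^ 2 + x (i + 1) ^ 2) * sq_sub_sq_mul_invSqGap hN hx i
  have hshift : ∑ i, x (i + 1) ^ 2 = ∑ i, x i ^ 2 :=
    Equiv.sum_comp (Equiv.addRight 1) fun i => x i ^ 2
  have h := sum_gaugeDrift_mul_self_smul a b hx fun i => x i ^ 2
  simp only [smul_eq_mul, hgap, Finset.sum_add_distrib, hshift] at h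
  calc ∑ i, gaugeDrift a b x i * x i ^ 3
    _ = ∑ i, gaugeDrift a b x i * x i * x i ^ 2 := Finset.sum_congr rfl fun i _ => by ring
    _ = (4 * a + b) * ∑ i, x i ^ 2 := by rw [h]; ring

lemma sum_sq_mul_invSqGap_sq (x : Fin N → ℝ) :
    ∑ i, x i ^ 2 * (invSqGap x i ^ 2 + invSqGap x (i - 1) ^ 2) = ∑ i, exchangeCoeff x i := by
  have hshift : ∑ i, x i ^ 2 * invSqGap x (i - 1) ^ 2 = ∑ i, x (i + 1) ^ 2 * invSqGap x i ^ 2 := by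
    rw [← Equiv.sum_comp (Equiv.addRight 1)]
    simp only [Equiv.coe_addRight, add_sub_cancel_right]
  simp only [mul_add, Finset.sum_add_distrib, hshift, exchangeCoeff_eq, add_mul]

/-- The Riccati form of the statement that `mu1` solves the Schrödinger equation whose potential
has `S_{i,i+1}` replaced by `1`. -/
lemma sum_gaugeDrift_sq_add_pd (hN : 2 ≤ N) (a b ω : ℝ) (hx : x ∈ C1 N) :
    ∑ j, ((gaugeDrift a b x j - ω * x j) ^ 2 + pd j (fun y => gaugeDrift a b y j - ω * y j) x) =
      scalarPotential a b ω x + 4 * a * (a - 1) * ∑ i, exchangeCoeff x i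
        - N * ω * (4 * a + 2 * b + 1) := by
  have hterm (j : Fin N) :
      (gaugeDrift a b x j - ω * x j) ^ 2 + pd j (fun y => gaugeDrift a b y j - ω * y j) x =
        ω ^ 2 * x j ^ 2 + b * (b - 1) / x j ^ 2
          + 8 * a ^ 2 * x j ^ 2 / ((x j ^ 2 - x (j - 1) ^ 2) * (x j ^ 2 - x (j + 1) ^ 2))
          + 4 * a * (a - 1) * (x j ^ 2 * (invSqGap x j ^ 2 + invSqGap x (j - 1) ^ 2))
          + (4 * a * b + 2 * a) * (invSqGap x j - invSqGap x (j - 1))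
          - 2 * ω * (gaugeDrift a b x j * x j) - ω := by
    have hpos := (pos_of_mem_C1 hx j).ne'
    have hpair : ((x j ^ 2 - x (j - 1) ^ 2) * (x j ^ 2 - x (j + 1) ^ 2))⁻¹ =
        -invSqGap x (j - 1) * invSqGap x j := by
      rw [mul_inv, invSqGap, invSqGap, sub_add_cancel, ← inv_neg, neg_sub]
    rw [pd_gaugeDrift_sub hN a b ω hx, gaugeDrift, div_eq_mul_inv (8 * a ^ 2 * x j ^ 2), hpair]
    field_simp
    ring
  have htelescope : ∑ j, (invSqGap x j - invSqGap x (j - 1)) = 0 := by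
    simpa using sum_sub_pred_smul 1 (invSqGap x) fun _ => (1 : ℝ)
  simp only [hterm, scalarPotential, Finset.sum_add_distrib, Finset.sum_sub_distrib,
    ← Finset.mul_sum, htelescope, sum_sq_mul_invSqGap_sq, sum_gaugeDrift_mul_self hN a b hx,
    Finset.sum_const, Finset.card_univ, Fintype.card_fin, nsmul_eq_mul]
  ring

end Gauge

section GaugedOperator

variable {N d : ℕ} [NeZero N] {x : Fin N → ℝ}

/-- The operator `J` with `μ⁻¹ H1 μ = E_0 - J + 2ω ∑ i, x_i ∂_i`, where `μ` is the gauge factor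
`mu1`; it involves neither `ω` nor the spin-independent part of the potential. -/
def gaugedOp (a b : ℝ) (Φ : (Fin N → ℝ) → Spin N d) (x : Fin N → ℝ) : Spin N d :=
  ∑ i, pd i (pd i Φ) x + (2 : ℝ) • ∑ i, gaugeDrift a b x i • pd i Φ x
    - (4 * a) • ∑ i, exchangeCoeff x i • (Φ x - Sop i (i + 1) (Φ x))

lemma H1_mu1_smul (hN : 2 ≤ N) (a b ω : ℝ) (hx : x ∈ C1 N) {Φ : (Fin N → ℝ) → Spin N d}
    (hΦ : ContDiffAt ℝ 2 Φ x) :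
    H1 a b ω (fun y => mu1 a b ω y • Φ y) x =
      mu1 a b ω x • ((N * ω * (4 * a + 2 * b + 1)) • Φ x - gaugedOp a b Φ x
        + (2 * ω) • ∑ i, x i • pd i Φ x) := by
  have hlap : ∑ i, pd i (pd i fun y => mu1 a b ω y • Φ y) x =
      mu1 a b ω x • ((scalarPotential a b ω x + 4 * a * (a - 1) * ∑ i, exchangeCoeff x i
          - N * ω * (4 * a + 2 * b + 1)) • Φ x
        + (2 : ℝ) • ∑ i, gaugeDrift a b x i • pd i Φ x
        - (2 * ω) • ∑ i, x i • pd i Φ x + ∑ i, pd i (pd i Φ) x) := by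
    simp only [← sum_gaugeDrift_sq_add_pd hN a b ω hx, Finset.sum_smul, Finset.smul_sum,
      ← Finset.sum_add_distrib, ← Finset.sum_sub_distrib]
    refine Finset.sum_congr rfl fun i _ => ?_
    rw [pd_pd_smul (contDiffAt_mu1 hN a b ω hx) hΦ, pd_pd_mu1 hN a b ω hx, pd_mu1 hN a b ω hx]
    module
  have hexchange : ∑ i, exchangeCoeff x i •
        (a • mu1 a b ω x • Φ x - Sop i (i + 1) (mu1 a b ω x • Φ x)) =
      mu1 a b ω x • (((a - 1) * ∑ i, exchangeCoeff x i) • Φ x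
        + ∑ i, exchangeCoeff x i • (Φ x - Sop i (i + 1) (Φ x))) := by
    simp only [Sop_smul, Finset.mul_sum, Finset.sum_smul, Finset.smul_sum,
      ← Finset.sum_add_distrib]
    exact Finset.sum_congr rfl fun i _ => by module
  have hH1 : H1 a b ω (fun y => mu1 a b ω y • Φ y) x =
      -∑ i, pd i (pd i fun y => mu1 a b ω y • Φ y) x
        + scalarPotential a b ω x • mu1 a b ω x • Φ x
        + (4 * a) • ∑ i, exchangeCoeff x i •
          (a • mu1 a b ω x • Φ x - Sop i (i + 1) (mu1 a b ω x • Φ x)) := rfl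
  rw [hH1, hlap, hexchange, gaugedOp]
  module

lemma gaugedOp_add (a b : ℝ) {Φ Ψ : (Fin N → ℝ) → Spin N d} (hΦ : ContDiffAt ℝ 2 Φ x)
    (hΨ : ContDiffAt ℝ 2 Ψ x) :
    gaugedOp a b (fun y => Φ y + Ψ y) x = gaugedOp a b Φ x + gaugedOp a b Ψ x := by
  have hpd (i : Fin N) : pd i (fun y => Φ y + Ψ y) x = pd i Φ x + pd i Ψ x :=
    pd_add (hΦ.differentiableAt two_ne_zero) (hΨ.differentiableAt two_ne_zero)
  simp only [gaugedOp, pd_pd_add hΦ hΨ, hpd, Sop_add, smul_add, add_sub_add_comm,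
    Finset.sum_add_distrib]
  module

lemma gaugedOp_const_smul (a b c : ℝ) (Φ : (Fin N → ℝ) → Spin N d) :
    gaugedOp a b (fun y => c • Φ y) x = c • gaugedOp a b Φ x := by
  simp only [gaugedOp, pd_const_smul, Sop_smul, ← smul_sub, smul_comm _ c, ← Finset.smul_sum,
    ← smul_add]

lemma gaugedOp_smul (a b : ℝ) {g : (Fin N → ℝ) → ℝ} {Φ : (Fin N → ℝ) → Spin N d}
    (hg : ContDiffAt ℝ 2 g x) (hΦ : ContDiffAt ℝ 2 Φ x) :
    gaugedOp a b (fun y => g y • Φ y) x =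
      g x • gaugedOp a b Φ x + (2 : ℝ) • ∑ i, pd i g x • pd i Φ x
        + (∑ i, pd i (pd i g) x + 2 * ∑ i, gaugeDrift a b x i * pd i g x) • Φ x := by
  have hpd (i : Fin N) : pd i (fun y => g y • Φ y) x = pd i g x • Φ x + g x • pd i Φ x :=
    pd_smul (hg.differentiableAt two_ne_zero) (hΦ.differentiableAt two_ne_zero)
  simp only [gaugedOp, pd_pd_smul hg hΦ, hpd, Sop_smul, add_smul, smul_add, mul_smul, smul_sub,
    Finset.mul_sum, Finset.smul_sum, Finset.sum_smul, Finset.sum_add_distrib,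
    Finset.sum_sub_distrib]
  simp only [smul_comm (g x)]
  abel

lemma gaugedOp_radial_smul (hN : 2 ≤ N) (a b : ℝ) (hx : x ∈ C1 N) {f : ℝ → ℝ}
    (hf : ContDiff ℝ 2 f) {Φ : (Fin N → ℝ) → Spin N d} (hΦ : ContDiffAt ℝ 2 Φ x) :
    gaugedOp a b (fun y => f (∑ i, y i ^ 2) • Φ y) x =
      f (∑ i, x i ^ 2) • gaugedOp a b Φ x
        + (4 * deriv f (∑ i, x i ^ 2)) • ∑ i, x i • pd i Φ x
        + (4 * ((∑ i, x i ^ 2) * deriv (deriv f) (∑ i, x i ^ 2)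
          + N * (2 * a + b + 1 / 2) * deriv f (∑ i, x i ^ 2))) • Φ x := by
  set ρ := ∑ i, x i ^ 2 with hρ
  have hradial : ContDiffAt ℝ 2 (fun y : Fin N → ℝ => f (∑ i, y i ^ 2)) x := by fun_prop
  have hpd (i : Fin N) : pd i (fun y => f (∑ k, y k ^ 2)) x = 2 * x i * deriv f ρ :=
    pd_radial (hf.differentiable two_ne_zero)
  have hlap : ∑ i, pd i (pd i fun y => f (∑ k, y k ^ 2)) x =
      4 * (ρ * deriv (deriv f) ρ) + 2 * N * deriv f ρ := by
    simp only [pd_pd_radial hf, Finset.sum_add_distrib, ← Finset.mul_sum, ← hρ,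
      Finset.sum_const, Finset.card_univ, Fintype.card_fin, nsmul_eq_mul]
    ring
  have hdrift : ∑ i, gaugeDrift a b x i * (2 * x i * deriv f ρ) =
      2 * deriv f ρ * (N * (b + 2 * a)) := by
    rw [← sum_gaugeDrift_mul_self hN a b hx, Finset.mul_sum]
    exact Finset.sum_congr rfl fun i _ => by ring
  have hcross : ∑ i, (2 * x i * deriv f ρ) • pd i Φ x =
      (2 * deriv f ρ) • ∑ i, x i • pd i Φ x := by
    rw [Finset.smul_sum]
    exact Finset.sum_congr rfl fun i _ => by module
  rw [gaugedOp_smul a b hradial hΦ]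
  simp only [hpd]
  rw [hlap, hdrift, hcross]
  module

end GaugedOperator

section Eigenfunctions

variable {N d : ℕ} [NeZero N] {x : Fin N → ℝ} {a b : ℝ}

/-- A homogeneous solution `P` of degree `δ` of `J P = 0` on `C1 N`, where `J = gaugedOp a b`. As
the solutions of interest are polynomials, smoothness and homogeneity are imposed on the whole
space. -/
structure IsGaugedHarmonic (a b : ℝ) (δ : ℕ) (P : (Fin N → ℝ) → Spin N d) : Prop where
  contDiff : ContDiff ℝ 2 P
  homogeneous : ∀ (t : ℝ) (x : Fin N → ℝ), P (t • x) = t ^ δ • P x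
  gaugedOp_eq_zero : ∀ x ∈ C1 N, gaugedOp a b P x = 0

theorem IsGaugedHarmonic.H1_mu1_mul_laguerre_smul {δ : ℕ} {P : (Fin N → ℝ) → Spin N d}
    (hP : IsGaugedHarmonic a b δ P) (hN : 2 ≤ N) (ω : ℝ) (n : ℕ) {lam : ℝ}
    (hlam : lam + 1 = N * (2 * a + b + 1 / 2) + δ) (hx : x ∈ C1 N) :
    H1 a b ω (fun y => (mu1 a b ω y * laguerre lam n (ω * ∑ i, y i ^ 2)) • P y) x =
      (N * ω * (4 * a + 2 * b + 1) + (4 * n + 2 * δ) * ω) •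
        ((mu1 a b ω x * laguerre lam n (ω * ∑ i, x i ^ 2)) • P x) := by
  set f : ℝ → ℝ := fun t => laguerre lam n (ω * t)
  have hf : ContDiff ℝ 2 f := (contDiff_laguerre lam n).comp (contDiff_const.mul contDiff_id)
  have hfP : ContDiffAt ℝ 2 (fun y => f (∑ i, y i ^ 2) • P y) x := by
    have := hP.contDiff
    fun_prop
  have heuler := sum_smul_pd_of_homogeneous (hP.contDiff.differentiable two_ne_zero x)
    (hP.homogeneous · x)
  have hode : (∑ i, x i ^ 2) * deriv (deriv f) (∑ i, x i ^ 2) =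
      -(N * (2 * a + b + 1 / 2) + δ - ω * ∑ i, x i ^ 2) * deriv f (∑ i, x i ^ 2)
        - n * ω * f (∑ i, x i ^ 2) := by
    rw [← hlam]
    linear_combination laguerre_scaled_differential_equation lam ω n (∑ i, x i ^ 2)
  simp only [mul_smul (mu1 a b ω _)]
  rw [H1_mu1_smul hN a b ω hx hfP, gaugedOp_radial_smul hN a b hx hf hP.contDiff.contDiffAt,
    sum_smul_pd_radial_smul (hf.differentiable two_ne_zero)
      (hP.contDiff.differentiable two_ne_zero x),
    hP.gaugedOp_eq_zero x hx, heuler, hode]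
  module

lemma isGaugedHarmonic_const {v : Spin N d} (hv : ∀ i j, Sop i j v = v) :
    IsGaugedHarmonic a b 0 fun _ => v where
  contDiff := contDiff_const
  homogeneous _ _ := by rw [pow_zero, one_smul]
  gaugedOp_eq_zero _ _ := by simp [gaugedOp, pd_const, hv]

lemma gaugedOp_sum_sq_smul (hN : 2 ≤ N) (a b : ℝ) (hx : x ∈ C1 N) {u : Fin N → Spin N d}
    (hu : ∀ i j k, Sop i j (u k) = u (Equiv.swap i j k)) :
    gaugedOp a b (fun y => ∑ k, y k ^ 2 • u k) x = (8 * a + 4 * b + 2) • ∑ k, u k := by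
  have hlap : ∑ i, pd i (pd i fun y => ∑ k, y k ^ 2 • u k) x = (2 : ℝ) • ∑ k, u k := by
    simp [pd_pd_sum_pow_smul, Finset.smul_sum]
  have hdrift : ∑ i, gaugeDrift a b x i • pd i (fun y => ∑ k, y k ^ 2 • u k) x =
      (2 : ℝ) • (b • ∑ k, u k
        + (2 * a) • ∑ i, invSqGap x i • (x i ^ 2 • u i - x (i + 1) ^ 2 • u (i + 1))) := by
    rw [← sum_gaugeDrift_mul_self_smul a b hx, Finset.smul_sum]
    refine Finset.sum_congr rfl fun i _ => ?_
    rw [pd_sum_pow_smul]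
    module
  have hexchange (i : Fin N) : exchangeCoeff x i •
      (∑ k, x k ^ 2 • u k - Sop i (i + 1) (∑ k, x k ^ 2 • u k)) =
        (2 : ℝ) • invSqGap x i • (x i ^ 2 • u i - x (i + 1) ^ 2 • u (i + 1))
          - u i - u (i + 1) := by
    have hgap := sq_sub_sq_mul_invSqGap hN hx i
    rw [sum_smul_sub_Sop hu _ (add_one_ne_self hN i).symm, exchangeCoeff_eq]
    linear_combination (norm := module)
      ((x i ^ 2 + x (i + 1) ^ 2) * invSqGap x i) • hgap • (u i - u (i + 1))
        - hgap • (u i + u (i + 1))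
  have hshift : ∑ i, u (i + 1) = ∑ i, u i := Equiv.sum_comp (Equiv.addRight 1) u
  rw [gaugedOp, hlap, hdrift]
  simp only [hexchange, Finset.sum_sub_distrib, ← Finset.smul_sum, hshift]
  module

lemma isGaugedHarmonic_sum_sq_smul (hN : 2 ≤ N) {u : Fin N → Spin N d}
    (hu : ∀ i j k, Sop i j (u k) = u (Equiv.swap i j k)) (hsum : ∑ k, u k = 0) :
    IsGaugedHarmonic a b 2 fun y => ∑ k, y k ^ 2 • u k where
  contDiff := by fun_prop
  homogeneous t x := by
    simp only [Pi.smul_apply, smul_eq_mul, mul_pow, mul_smul, Finset.smul_sum]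
  gaugedOp_eq_zero x hx := by rw [gaugedOp_sum_sq_smul hN a b hx hu, hsum, smul_zero]

lemma isGaugedHarmonic_quadratic (hN : 2 ≤ N) (s : Spin N d) :
    IsGaugedHarmonic a b 2 fun y =>
      (N : ℝ) • (∑ i, y i ^ 2 • sComp s i) - (∑ i, y i ^ 2) • Lam s := by
  have hequivariant (i j k : Fin N) : Sop i j ((N : ℝ) • sComp s k - Lam s) =
      (N : ℝ) • sComp s (Equiv.swap i j k) - Lam s := by
    rw [Sop_sub, Sop_smul, Sop_sComp, Sop_Lam]
  have hsum : ∑ k, ((N : ℝ) • sComp s k - Lam s) = 0 := by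
    rw [Finset.sum_sub_distrib, ← Finset.smul_sum, ← Lam, Finset.sum_const, Finset.card_univ,
      Fintype.card_fin, Nat.cast_smul_eq_nsmul, sub_self]
  convert isGaugedHarmonic_sum_sq_smul hN hequivariant hsum using 2
  simp only [smul_sub, Finset.sum_sub_distrib, Finset.smul_sum, Finset.sum_smul,
    smul_comm (N : ℝ)]

lemma gaugedOp_sum_pow_four_smul (hN : 2 ≤ N) (a b : ℝ) (hx : x ∈ C1 N) {v : Spin N d}
    (hv : ∀ i j, Sop i j v = v) :
    gaugedOp a b (fun y => (∑ k, y k ^ 4) • v) x =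
      (8 * (4 * a + b + 3 / 2) * ∑ k, x k ^ 2) • v := by
  have hpd (i : Fin N) : pd i (fun y => ∑ k, y k ^ 4) x = 4 * x i ^ 3 := by
    simpa using congrFun (pd_sum_pow_smul (i := i) 4 fun _ => (1 : ℝ)) x
  have hpdpd (i : Fin N) : pd i (pd i fun y => ∑ k, y k ^ 4) x = 4 * (3 * x i ^ 2) := by
    simpa using congrFun (pd_pd_sum_pow_smul (i := i) 4 fun _ => (1 : ℝ)) x
  rw [gaugedOp_smul a b (by fun_prop) contDiffAt_const,
    (isGaugedHarmonic_const hv).gaugedOp_eq_zero x hx]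
  simp only [hpd, hpdpd, pd_const, smul_zero, Finset.sum_const_zero, add_zero, zero_add,
    mul_left_comm _ (4 : ℝ), ← Finset.mul_sum, sum_gaugeDrift_mul_cube hN a b hx]
  module

lemma gaugedOp_sum_sq_sq_smul (hN : 2 ≤ N) (a b : ℝ) (hx : x ∈ C1 N) {v : Spin N d}
    (hv : ∀ i j, Sop i j v = v) :
    gaugedOp a b (fun y => (∑ k, y k ^ 2) ^ 2 • v) x =
      (8 * (N * (2 * a + b + 1 / 2) + 1) * ∑ k, x k ^ 2) • v := by
  have hderiv : deriv (fun t : ℝ => t ^ 2) = fun t => 2 * t := by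
    ext1 t; simp
  have hderiv_deriv (t : ℝ) : deriv (fun t : ℝ => 2 * t) t = 2 := by
    simp
  rw [gaugedOp_radial_smul (f := fun t => t ^ 2) hN a b hx (by fun_prop) contDiffAt_const,
    (isGaugedHarmonic_const hv).gaugedOp_eq_zero x hx]
  simp only [hderiv, hderiv_deriv, pd_const, smul_zero, Finset.sum_const_zero, add_zero, zero_add]
  module

lemma isGaugedHarmonic_quartic_smul (hN : 2 ≤ N) {v : Spin N d} (hv : ∀ i j, Sop i j v = v) :
    IsGaugedHarmonic a b 4 fun y =>
      (N * (N * (2 * a + b + 1 / 2) + 1) * (∑ i, y i ^ 4)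
        - N * (4 * a + b + 3 / 2) * (∑ i, y i ^ 2) ^ 2) • v where
  contDiff := by fun_prop
  homogeneous t x := by
    simp only [Pi.smul_apply, smul_eq_mul, mul_pow, ← Finset.mul_sum, smul_smul]
    ring_nf
  gaugedOp_eq_zero x hx := by
    simp only [sub_eq_add_neg, ← neg_mul, add_smul, mul_smul (N * _ : ℝ), mul_smul (-N * _ : ℝ)]
    rw [gaugedOp_add a b (by fun_prop) (by fun_prop), gaugedOp_const_smul, gaugedOp_const_smul,
      gaugedOp_sum_pow_four_smul hN a b hx hv, gaugedOp_sum_sq_sq_smul hN a b hx hv]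
    module

end Eigenfunctions

theorem stmt_17_general (N d : ℕ) [NeZero N] (hN : 2 ≤ N) (a b ω : ℝ) (s : Spin N d) (k : ℕ) :
    (∀ x ∈ C1 N,
      H1 a b ω (fun y =>
          (mu1 a b ω y *
            laguerre ((N : ℝ) * (2 * a + b + 1 / 2) - 1) k
              (ω * ∑ i : Fin N, (y i) ^ 2)) • Lam s) x =
        ((N : ℝ) * ω * (4 * a + 2 * b + 1) + 4 * k * ω) •
          ((mu1 a b ω x *
            laguerre ((N : ℝ) * (2 * a + b + 1 / 2) - 1) k
              (ω * ∑ i : Fin N, (x i) ^ 2)) • Lam s)) ∧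
    (1 ≤ k → ∀ x ∈ C1 N,
      H1 a b ω (fun y =>
          (mu1 a b ω y *
            laguerre ((N : ℝ) * (2 * a + b + 1 / 2) + 1) (k - 1)
              (ω * ∑ i : Fin N, (y i) ^ 2)) •
            ((N : ℝ) • (∑ i : Fin N, (y i) ^ 2 • sComp s i) -
              (∑ i : Fin N, (y i) ^ 2) • Lam s)) x =
        ((N : ℝ) * ω * (4 * a + 2 * b + 1) + 4 * k * ω) •
          ((mu1 a b ω x *
            laguerre ((N : ℝ) * (2 * a + b + 1 / 2) + 1) (k - 1)
              (ω * ∑ i : Fin N, (x i) ^ 2)) •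
            ((N : ℝ) • (∑ i : Fin N, (x i) ^ 2 • sComp s i) -
              (∑ i : Fin N, (x i) ^ 2) • Lam s))) ∧
    (2 ≤ k → ∀ x ∈ C1 N,
      H1 a b ω (fun y =>
          (mu1 a b ω y *
            laguerre ((N : ℝ) * (2 * a + b + 1 / 2) + 3) (k - 2)
              (ω * ∑ i : Fin N, (y i) ^ 2) *
            ((N : ℝ) * ((N : ℝ) * (2 * a + b + 1 / 2) + 1) * (∑ i : Fin N, (y i) ^ 4) -
              (N : ℝ) * (4 * a + b + 3 / 2) * (∑ i : Fin N, (y i) ^ 2) ^ 2)) • Lam s) x =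
        ((N : ℝ) * ω * (4 * a + 2 * b + 1) + 4 * k * ω) •
          ((mu1 a b ω x *
            laguerre ((N : ℝ) * (2 * a + b + 1 / 2) + 3) (k - 2)
              (ω * ∑ i : Fin N, (x i) ^ 2) *
            ((N : ℝ) * ((N : ℝ) * (2 * a + b + 1 / 2) + 1) * (∑ i : Fin N, (x i) ^ 4) -
              (N : ℝ) * (4 * a + b + 3 / 2) * (∑ i : Fin N, (x i) ^ 2) ^ 2)) • Lam s)) := by
  refine ⟨fun x hx => ?_, fun hk x hx => ?_, fun hk x hx => ?_⟩
  · have hP : IsGaugedHarmonic a b 0 fun _ => Lam s := isGaugedHarmonic_const (Sop_Lam s)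
    convert hP.H1_mu1_mul_laguerre_smul hN ω k ?_ hx using 2 <;> push_cast <;> ring
  · obtain ⟨n, rfl⟩ := Nat.exists_eq_add_of_le' hk
    convert (isGaugedHarmonic_quadratic hN s).H1_mu1_mul_laguerre_smul hN ω n ?_ hx using 2 <;>
      push_cast <;> ring
  · obtain ⟨n, rfl⟩ := Nat.exists_eq_add_of_le' hk
    simp only [mul_smul _ (_ - _)]
    convert (isGaugedHarmonic_quartic_smul hN (Sop_Lam s)).H1_mu1_mul_laguerre_smul hN ω n ?_ hx
      using 2 <;> push_cast <;> ring

theorem stmt_17 (N d : ℕ) [NeZero N] (hN : 3 ≤ N) (hd : 1 ≤ d)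
    (a b ω : ℝ) (ha : 1 / 2 < a) (hb : 1 / 2 < b) (hω : 0 < ω)
    (s : Spin N d) (k : ℕ) :
    (∀ x ∈ C1 N,
      H1 a b ω (fun y =>
          (mu1 a b ω y *
            laguerre ((N : ℝ) * (2 * a + b + 1 / 2) - 1) k
              (ω * ∑ i : Fin N, (y i) ^ 2)) • Lam s) x =
        ((N : ℝ) * ω * (4 * a + 2 * b + 1) + 4 * k * ω) •
          ((mu1 a b ω x *
            laguerre ((N : ℝ) * (2 * a + b + 1 / 2) - 1) k
              (ω * ∑ i : Fin N, (x i) ^ 2)) • Lam s)) ∧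
    (1 ≤ k → ∀ x ∈ C1 N,
      H1 a b ω (fun y =>
          (mu1 a b ω y *
            laguerre ((N : ℝ) * (2 * a + b + 1 / 2) + 1) (k - 1)
              (ω * ∑ i : Fin N, (y i) ^ 2)) •
            ((N : ℝ) • (∑ i : Fin N, (y i) ^ 2 • sComp s i) -
              (∑ i : Fin N, (y i) ^ 2) • Lam s)) x =
        ((N : ℝ) * ω * (4 * a + 2 * b + 1) + 4 * k * ω) •
          ((mu1 a b ω x *
            laguerre ((N : ℝ) * (2 * a + b + 1 / 2) + 1) (k - 1)
              (ω * ∑ i : Fin N, (x i) ^ 2)) •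
            ((N : ℝ) • (∑ i : Fin N, (x i) ^ 2 • sComp s i) -
              (∑ i : Fin N, (x i) ^ 2) • Lam s))) ∧
    (2 ≤ k → ∀ x ∈ C1 N,
      H1 a b ω (fun y =>
          (mu1 a b ω y *
            laguerre ((N : ℝ) * (2 * a + b + 1 / 2) + 3) (k - 2)
              (ω * ∑ i : Fin N, (y i) ^ 2) *
            ((N : ℝ) * ((N : ℝ) * (2 * a + b + 1 / 2) + 1) * (∑ i : Fin N, (y i) ^ 4) -
              (N : ℝ) * (4 * a + b + 3 / 2) * (∑ i : Fin N, (y i) ^ 2) ^ 2)) • Lam s) x =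
        ((N : ℝ) * ω * (4 * a + 2 * b + 1) + 4 * k * ω) •
          ((mu1 a b ω x *
            laguerre ((N : ℝ) * (2 * a + b + 1 / 2) + 3) (k - 2)
              (ω * ∑ i : Fin N, (x i) ^ 2) *
            ((N : ℝ) * ((N : ℝ) * (2 * a + b + 1 / 2) + 1) * (∑ i : Fin N, (x i) ^ 4) -
              (N : ℝ) * (4 * a + b + 3 / 2) * (∑ i : Fin N, (x i) ^ 2) ^ 2)) • Lam s)) := by
  exact stmt_17_general N d (by lia) a b ω s k
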